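/- arXiv:0707.3725 — 3 statements merged into one kernel-verified Lean document; each statement's English description precedes it below -/
import Mathlib

section
/- Let I be a finite type and let t be a rooted tree on I. Consider the interval consisting of all forests f on I with f ⊑ t, partially ordered by the grafting order ⊑. The map sending such a forest f to its set of minimal elements is an order anti-isomorphism from this interval onto the set of nonempty lower sets of the poset (I, ≤_t), ordered by inclusion. -/
/-!
In a forest `g`, cutting the edge from a root `r` to one of its children `c` is the inverse of
grafting the tree rooted at `c` onto `r`, and the cut adds exactly `c` to the set of roots. Undoing
the graftings that lead from `f` to `t` one after another, `f` is `t` with the edges entering its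
roots cut, so `f` is determined by its set of roots. Each edge cut starts at a root, so this set
stays a lower set of `t`. Conversely, to pass from a lower set `S` to a larger one `S'`, cut at a
minimal element `c` of `S' \ S`: it is a child of the greatest element of `S` below it, which is
a root after the cut along `S`.
-/

/-- A forest on `I`: a partial order in which every principal lower set is a chain. -/
def IsForest {I : Type*} (f : PartialOrder I) : Prop :=
  ∀ v : I, IsChain f.le {u : I | f.le u v}

/-- A rooted tree on `I`: a forest with a least element (the root). -/
def IsRootedTree {I : Type*} (t : PartialOrder I) : Prop :=
  (∃ r : I, ∀ v : I, t.le r v) ∧ IsForest t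

/-- `g` is obtained from `f` by a single grafting: there are two distinct minimal
elements `r, r'` of `f` such that `x ≤_g y ↔ x ≤_f y ∨ (x = r ∧ r' ≤_f y)`. -/
def SingleGraft {I : Type*} (f g : PartialOrder I) : Prop :=
  ∃ r r' : I, r ≠ r' ∧ (∀ y, f.le y r → y = r) ∧ (∀ y, f.le y r' → y = r') ∧
    ∀ x y : I, g.le x y ↔ (f.le x y ∨ (x = r ∧ f.le r' y))

/-- The grafting order: reflexive-transitive closure of single grafting. -/
def GraftLE {I : Type*} (f g : PartialOrder I) : Prop :=
  Relation.ReflTransGen SingleGraft f g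

/-- The roots of the trees that make up the forest `f`. -/
def forestRoots {I : Type*} (f : PartialOrder I) : Set I :=
  {x | ∀ y, f.le y x → y = x}

/-- The order obtained from `t` by cutting the edges that enter the elements of `S`. When `t` is a
forest, the condition on `z` says that no element of `S` lies in the half-open interval `(x, y]`;
in the present form it is transitive for every `t`. -/
abbrev cutOrder {I : Type*} (t : PartialOrder I) (S : Set I) : PartialOrder I where
  le x y := t.le x y ∧ ∀ z ∈ S, t.le z y → t.le z x
  lt x y := (t.le x y ∧ ∀ z ∈ S, t.le z y → t.le z x) ∧
    ¬ (t.le y x ∧ ∀ z ∈ S, t.le z x → t.le z y)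
  lt_iff_le_not_ge _ _ := Iff.rfl
  le_refl x := ⟨t.le_refl x, fun _ _ hz => hz⟩
  le_trans x y w hxy hyw :=
    ⟨t.le_trans x y w hxy.1 hyw.1, fun z hz hzw => hxy.2 z hz (hyw.2 z hz hzw)⟩
  le_antisymm x y hxy hyx := t.le_antisymm x y hxy.1 hyx.1

/-- `c` is a child of the root `r` in the forest `g`, expressed by saying that the elements below
`c` are exactly `r` and `c`. -/
def IsRootChild {I : Type*} (g : PartialOrder I) (r c : I) : Prop :=
  r ≠ c ∧ ∀ y, g.le y c ↔ y = r ∨ y = c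

/-- The sets that occur as sets of roots of forests `f ⊑ t`: the lower sets of `t` that consist of
the roots of `t` and finitely many further elements, one for each edge that is cut. -/
structure IsRootSet {I : Type*} (t : PartialOrder I) (S : Set I) : Prop where
  roots_subset : forestRoots t ⊆ S
  finite_diff : (S \ forestRoots t).Finite
  mem_of_le : ∀ ⦃a b : I⦄, t.le a b → b ∈ S → a ∈ S

section

variable {I : Type*} {t f g : PartialOrder I} {S S' : Set I} {r c : I}

lemma IsForest.le_or_le (ht : IsForest t) {x y v : I} (hx : t.le x v) (hy : t.le y v) :
    t.le x y ∨ t.le y x := by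
  let := t
  exact (ht v).total hx hy

lemma IsForest.cutOrder (ht : IsForest t) (S : Set I) : IsForest (cutOrder t S) := by
  intro v x hx y hy _
  exact (ht.le_or_le hx.1 hy.1).imp
    (fun h => ⟨h, fun z hz hzy => hx.2 z hz (t.le_trans _ _ _ hzy hy.1)⟩)
    (fun h => ⟨h, fun z hz hzx => hy.2 z hz (t.le_trans _ _ _ hzx hx.1)⟩)

lemma cutOrder_cutOrder (ht : IsForest t) (S A : Set I) :
    cutOrder (cutOrder t S) A = cutOrder t (S ∪ A) := by
  refine PartialOrder.ext fun x y => ⟨fun ⟨⟨hxy, hS⟩, hA⟩ => ⟨hxy, ?_⟩, fun ⟨hxy, hSA⟩ => ?_⟩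
  · rintro z (hz | hz) hzy
    · exact hS z hz hzy
    · by_cases hzy' : (cutOrder t S).le z y
      · exact (hA z hz hzy').1
      · obtain ⟨s, hs, hsy, hsz⟩ : ∃ s ∈ S, t.le s y ∧ ¬ t.le s z := by
          by_contra! h
          exact hzy' ⟨hzy, h⟩
        have hzs : t.le z s := (ht.le_or_le hzy hsy).resolve_right hsz
        exact t.le_trans _ _ _ hzs (hS s hs hsy)
  · exact ⟨⟨hxy, fun z hz => hSA z (.inl hz)⟩, fun z hz hzy =>
      ⟨hSA z (.inr hz) hzy.1, fun s hs hsx => hzy.2 s hs (t.le_trans _ _ _ hsx hxy)⟩⟩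

lemma cutOrder_forestRoots (ht : IsForest t) : cutOrder t (forestRoots t) = t := by
  refine PartialOrder.ext fun x y => ⟨And.left, fun hxy => ⟨hxy, fun z hz hzy => ?_⟩⟩
  rcases ht.le_or_le hzy hxy with h | h
  · exact h
  · exact hz x h ▸ t.le_refl x

lemma forestRoots_cutOrder_eq_union
    (hS : ∀ x, ∀ s ∈ S, t.le s x → ∃ p ∈ S, t.le p x ∧ ∀ z ∈ S, t.le z x → t.le z p) :
    forestRoots (cutOrder t S) = forestRoots t ∪ S := by
  refine subset_antisymm (fun x hx => or_iff_not_imp_right.2 fun hxS => ?_)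
    (Set.union_subset (fun x hx y hy => hx y hy.1) fun x hx y hy =>
      t.le_antisymm _ _ hy.1 (hy.2 x hx (t.le_refl x)))
  have h_none : ∀ s ∈ S, ¬ t.le s x := fun s hs hsx => by
    obtain ⟨p, hp, hpx, hmax⟩ := hS x s hs hsx
    exact hxS (hx p ⟨hpx, hmax⟩ ▸ hp)
  exact fun y hy => hx y ⟨hy, fun z hz hzx => absurd hzx (h_none z hz)⟩

lemma forestRoots_cutOrder_singleton (t : PartialOrder I) (c : I) :
    forestRoots (cutOrder t {c}) = forestRoots t ∪ {c} := by
  refine forestRoots_cutOrder_eq_union ?_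
  intro x _ hs hcx
  rw [Set.mem_singleton_iff.1 hs] at hcx
  exact ⟨c, rfl, hcx, fun z hz _ => hz ▸ t.le_refl c⟩

lemma IsRootChild.mem_forestRoots (h : IsRootChild g r c) : r ∈ forestRoots g := by
  intro y hyr
  have hrc : g.le r c := (h.2 r).2 (.inl rfl)
  refine ((h.2 y).1 (g.le_trans _ _ _ hyr hrc)).resolve_right ?_
  rintro rfl
  exact h.1 (g.le_antisymm _ _ hrc hyr)

lemma IsRootChild.singleGraft_cutOrder (hg : IsForest g) (h : IsRootChild g r c) :
    SingleGraft (cutOrder g {c}) g := by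
  have hroots := forestRoots_cutOrder_singleton g c
  have hrc : g.le r c := (h.2 r).2 (.inl rfl)
  refine ⟨r, c, h.1, hroots.ge (.inl h.mem_forestRoots), hroots.ge (.inr rfl),
    fun x y => ⟨fun hxy => ?_, ?_⟩⟩
  · by_cases hcut : g.le c y → g.le c x
    · exact .inl ⟨hxy, fun z hz => hz ▸ hcut⟩
    · obtain ⟨hcy, hcx⟩ := Classical.not_imp.1 hcut
      have hxc : g.le x c := (hg.le_or_le hxy hcy).resolve_right hcx
      have hx : x = r := ((h.2 x).1 hxc).resolve_right fun e => hcx (e ▸ g.le_refl c)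
      exact .inr ⟨hx, hcy, fun z hz _ => hz ▸ g.le_refl c⟩
  · rintro (hxy | ⟨rfl, hcy⟩)
    · exact hxy.1
    · exact g.le_trans _ _ _ hrc hcy.1

lemma SingleGraft.exists_eq_cutOrder (hf : IsForest f) (h : SingleGraft f g) :
    ∃ r c, IsRootChild g r c ∧ f = cutOrder g {c} := by
  obtain ⟨r, c, hne, hr, hc, hg⟩ := h
  have hfg : ∀ {x y}, f.le x y → g.le x y := fun hxy => (hg _ _).2 (.inl hxy)
  have hgc : ∀ {y}, g.le c y → f.le c y := fun hcy =>
    ((hg _ _).1 hcy).elim id And.right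
  refine ⟨r, c, ⟨hne, fun y => ⟨fun hy => ?_, ?_⟩⟩,
    PartialOrder.ext fun x y => ⟨fun hxy => ?_, ?_⟩⟩
  · exact ((hg y c).1 hy).symm.imp And.left (hc y)
  · rintro (rfl | rfl)
    · exact (hg _ _).2 (.inr ⟨rfl, f.le_refl _⟩)
    · exact g.le_refl _
  · refine ⟨hfg hxy, ?_⟩
    rintro _ rfl hcy
    rcases hf.le_or_le hxy (hgc hcy) with hxc | hcx
    · exact hc x hxc ▸ g.le_refl x
    · exact hfg hcx
  · rintro ⟨hxy, hcut⟩
    refine ((hg x y).1 hxy).resolve_right ?_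
    rintro ⟨rfl, hcy⟩
    exact hne (hr c (hgc (hcut c rfl (hfg hcy)))).symm

lemma IsForest.of_singleGraft (hf : IsForest f) (h : SingleGraft f g) : IsForest g := by
  obtain ⟨r, c, -, -, hc, hg⟩ := h
  -- Grafting puts `r` below the whole tree with root `c`, which contains all `f`-ancestors of `v`.
  have h_root_le : ∀ {x v}, f.le c v → f.le x v → g.le r x := fun {x v} hcv hxv => by
    refine (hg r x).2 (.inr ⟨rfl, ?_⟩)
    rcases hf.le_or_le hcv hxv with hcx | hxc
    · exact hcx
    · exact hc x hxc ▸ f.le_refl x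
  intro v x hx y hy hne
  rcases (hg x v).1 hx with hx | ⟨rfl, hx⟩ <;> rcases (hg y v).1 hy with hy | ⟨rfl, hy⟩
  · exact (hf.le_or_le hx hy).imp (fun h => (hg _ _).2 (.inl h)) (fun h => (hg _ _).2 (.inl h))
  · exact .inr (h_root_le hy hx)
  · exact .inl (h_root_le hx hy)
  · exact absurd rfl hne

lemma GraftLE.forestRoots_subset (h : GraftLE f g) : forestRoots g ⊆ forestRoots f := by
  induction h with
  | refl => exact subset_rfl
  | tail _ hgraft ih =>
    obtain ⟨r, c, -, -, -, hg⟩ := hgraft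
    exact subset_trans (fun x hx y hy => hx y ((hg y x).2 (.inl hy))) ih

lemma isRootSet_forestRoots (t : PartialOrder I) : IsRootSet t (forestRoots t) where
  roots_subset := subset_rfl
  finite_diff := by simp only [sdiff_self, Set.bot_eq_empty, Set.finite_empty]
  mem_of_le a b hab hb := hb a hab ▸ hb

lemma IsRootSet.union_singleton (hS : IsRootSet t S) (hc : ∀ y, t.le y c → y ≠ c → y ∈ S) :
    IsRootSet t (S ∪ {c}) where
  roots_subset := hS.roots_subset.trans Set.subset_union_left
  finite_diff := by
    rw [Set.union_sdiff_distrib]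
    exact hS.finite_diff.union ((Set.finite_singleton c).sdiff)
  mem_of_le := by
    rintro a b hab (hb | rfl)
    · exact .inl (hS.mem_of_le hab hb)
    · exact or_iff_not_imp_right.2 (hc a hab)

lemma IsRootSet.exists_greatest_le (ht : IsForest t) (hS : IsRootSet t S) {x s : I} (hs : s ∈ S)
    (hsx : t.le s x) : ∃ p ∈ S, t.le p x ∧ ∀ z ∈ S, t.le z x → t.le z p := by
  let := t
  have h_fin : {z | z ∈ S ∧ s ≤ z ∧ z ≤ x}.Finite := by
    refine (hS.finite_diff.insert s).subset fun z ⟨hz, hsz, _⟩ => ?_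
    by_cases hz_root : z ∈ forestRoots t
    · exact .inl (hz_root s hsz).symm
    · exact .inr ⟨hz, hz_root⟩
  obtain ⟨p, ⟨hp, hsp, hpx⟩, hmax⟩ := h_fin.exists_maximal ⟨s, hs, le_rfl, hsx⟩
  refine ⟨p, hp, hpx, fun z hz hzx => ?_⟩
  rcases ht.le_or_le hzx hpx with hzp | hpz
  · exact hzp
  · exact hmax ⟨hz, hsp.trans hpz, hzx⟩ hpz

lemma IsRootSet.forestRoots_cutOrder (ht : IsForest t) (hS : IsRootSet t S) :
    forestRoots (cutOrder t S) = S := by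
  rw [forestRoots_cutOrder_eq_union fun _ _ hs hsx => hS.exists_greatest_le ht hs hsx,
    Set.union_eq_right.2 hS.roots_subset]

lemma IsRootSet.mem_of_le_rootChild (ht : IsForest t) (hS : IsRootSet t S)
    (h : IsRootChild (cutOrder t S) r c) {a : I} (hac : t.le a c) (hne : a ≠ c) : a ∈ S := by
  have hr : r ∈ S := hS.forestRoots_cutOrder ht ▸ h.mem_forestRoots
  have hrc : (cutOrder t S).le r c := (h.2 r).2 (.inl rfl)
  rcases ht.le_or_le hac hrc.1 with har | hra
  · exact hS.mem_of_le har hr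
  · have hac' : (cutOrder t S).le a c :=
      ⟨hac, fun z hz hzc => t.le_trans _ _ _ (hrc.2 z hz hzc) hra⟩
    exact ((h.2 a).1 hac').resolve_right hne ▸ hr

lemma IsRootSet.exists_isRootChild (ht : IsForest t) (hS : IsRootSet t S) (hcS : c ∉ S)
    (hc : ∀ y, t.le y c → y ≠ c → y ∈ S) : ∃ r, IsRootChild (cutOrder t S) r c := by
  obtain ⟨s, hsc, hne⟩ : ∃ s, t.le s c ∧ s ≠ c := by
    by_contra! h
    exact hcS (hS.roots_subset h)
  obtain ⟨r, hr, hrc, hmax⟩ := hS.exists_greatest_le ht (hc s hsc hne) hsc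
  refine ⟨r, fun e => hcS (e ▸ hr), fun y => ⟨fun hy => or_iff_not_imp_right.2 fun hyc => ?_, ?_⟩⟩
  · exact t.le_antisymm _ _ (hmax y (hc y hy.1 hyc) hy.1) (hy.2 r hr hrc)
  · rintro (rfl | rfl)
    · exact ⟨hrc, hmax⟩
    · exact (cutOrder t S).le_refl y

lemma GraftLE.isRootSet_and_cutOrder_eq (ht : IsForest t) (h : GraftLE f t) (hf : IsForest f) :
    IsRootSet t (forestRoots f) ∧ cutOrder t (forestRoots f) = f := by
  induction h using Relation.ReflTransGen.head_induction_on with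
  | refl => exact ⟨isRootSet_forestRoots t, cutOrder_forestRoots ht⟩
  | @head f g hfg _ ih =>
    obtain ⟨hS, hg⟩ := ih (hf.of_singleGraft hfg)
    obtain ⟨r, c, hrc, rfl⟩ := hfg.exists_eq_cutOrder hf
    rw [forestRoots_cutOrder_singleton, ← cutOrder_cutOrder ht, hg]
    rw [← hg] at hrc
    exact ⟨hS.union_singleton fun _ hyc hne => hS.mem_of_le_rootChild ht hrc hyc hne, rfl⟩

lemma IsRootSet.graftLE_cutOrder (ht : IsForest t) (hS : IsRootSet t S) (hS' : IsRootSet t S')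
    (hsub : S ⊆ S') : GraftLE (cutOrder t S') (cutOrder t S) := by
  let := t
  have h_fin : (S' \ S).Finite :=
    hS'.finite_diff.subset (Set.sdiff_subset_sdiff_right hS.roots_subset)
  induction hn : (S' \ S).ncard generalizing S with
  | zero =>
    have hsup : S' ⊆ S := Set.sdiff_eq_empty.1 ((Set.ncard_eq_zero h_fin).1 hn)
    rw [subset_antisymm hsub hsup]
    exact .refl
  | succ n ih =>
    obtain ⟨c, ⟨hcS', hcS⟩, hmin⟩ :=
      h_fin.exists_minimal (Set.nonempty_of_ncard_ne_zero (hn ▸ n.succ_ne_zero))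
    have hc : ∀ y, t.le y c → y ≠ c → y ∈ S := fun y hyc hne => by
      by_contra hyS
      exact hne (le_antisymm hyc (hmin ⟨hS'.mem_of_le hyc hcS', hyS⟩ hyc))
    have hdiff : S' \ (S ∪ {c}) = (S' \ S) \ {c} := Set.sdiff_sdiff.symm
    have hgraft : GraftLE (cutOrder t S') (cutOrder t (S ∪ {c})) := by
      refine ih (hS.union_singleton hc)
        (Set.union_subset hsub (Set.singleton_subset_iff.2 hcS')) (hdiff ▸ h_fin.sdiff) ?_
      have hcD : c ∈ S' \ S := ⟨hcS', hcS⟩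
      rw [hdiff, Set.ncard_sdiff_singleton_of_mem hcD, hn, Nat.add_sub_cancel]
    obtain ⟨r, hrc⟩ := hS.exists_isRootChild ht hcS hc
    rw [← cutOrder_cutOrder ht] at hgraft
    exact hgraft.tail (hrc.singleGraft_cutOrder (ht.cutOrder S))

lemma IsRootSet.cutOrder_graftLE (ht : IsForest t) (hS : IsRootSet t S) :
    GraftLE (cutOrder t S) t := by
  simpa only [cutOrder_forestRoots ht] using
    (isRootSet_forestRoots t).graftLE_cutOrder ht hS hS.roots_subset

lemma IsRootedTree.isRootSet_iff [Finite I] (ht : IsRootedTree t) :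
    IsRootSet t S ↔ S.Nonempty ∧ ∀ ⦃a b : I⦄, t.le a b → b ∈ S → a ∈ S := by
  obtain ⟨⟨r, hr⟩, -⟩ := ht
  refine ⟨fun hS => ⟨⟨r, hS.roots_subset fun y hyr => t.le_antisymm _ _ hyr (hr y)⟩, hS.mem_of_le⟩,
    fun ⟨⟨s, hs⟩, hlow⟩ => ⟨fun x hx => ?_, Set.toFinite _, hlow⟩⟩
  exact hx r (hr x) ▸ hlow (hr s) hs

end

theorem interval_antiIso_nonempty_lowerSets_general {I : Type*} {t : PartialOrder I}
    (ht : IsForest t) :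
    ∃ e : {f : PartialOrder I // IsForest f ∧ GraftLE f t} ≃ {S : Set I // IsRootSet t S},
      (∀ f, (e f : Set I) = forestRoots f.1) ∧
      (∀ f g : {f : PartialOrder I // IsForest f ∧ GraftLE f t}, GraftLE f.1 g.1 ↔
        (e g : Set I) ⊆ (e f : Set I)) := by
  have hspec (f : {f : PartialOrder I // IsForest f ∧ GraftLE f t}) :=
    f.2.2.isRootSet_and_cutOrder_eq ht f.2.1
  refine ⟨{
    toFun := fun f => ⟨forestRoots f.1, (hspec f).1⟩
    invFun := fun S => ⟨cutOrder t S, ht.cutOrder S, S.2.cutOrder_graftLE ht⟩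
    left_inv := fun f => Subtype.ext (hspec f).2
    right_inv := fun S => Subtype.ext (S.2.forestRoots_cutOrder ht) },
    fun _ => rfl, fun f g => ⟨GraftLE.forestRoots_subset, fun hsub => ?_⟩⟩
  rw [← (hspec f).2, ← (hspec g).2]
  exact (hspec g).1.graftLE_cutOrder ht (hspec f).1 hsub

/-- The map sending a forest `f ⊑ t` to its set of minimal elements is an order
anti-isomorphism from the interval `[⊥, t]` for the grafting order onto the
nonempty lower sets of the rooted tree `t`, ordered by inclusion. -/
theorem interval_antiIso_nonempty_lowerSets {I : Type*} [Fintype I]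
    (t : PartialOrder I) (ht : IsRootedTree t) :
    ∃ e : {f : PartialOrder I // IsForest f ∧ GraftLE f t} ≃
          {S : Set I // S.Nonempty ∧ ∀ ⦃a b : I⦄, t.le a b → b ∈ S → a ∈ S},
      (∀ f, (e f : Set I) = {x : I | ∀ y : I, (f : PartialOrder I).le y x → y = x}) ∧
      (∀ f g : {f : PartialOrder I // IsForest f ∧ GraftLE f t}, GraftLE f.1 g.1 ↔
        (e g : Set I) ⊆ (e f : Set I)) := by
  obtain ⟨e, he, hle⟩ := interval_antiIso_nonempty_lowerSets_general ht.2
  exact ⟨e.trans (Equiv.subtypeEquivRight fun _ => ht.isRootSet_iff), he, hle⟩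
end

section
/- Let t be a rooted tree on a finite type I with root r. Say that t is a corolla if every element other than r covers r and is maximal, equivalently: for all x, y, if x ≤_t y and x ≠ y then x = r. Then the Möbius number μ(⊥,⊤) of the poset of nonempty lower sets of t, ordered by inclusion, equals (-1)^(|I|-1) if t is a corolla, and equals 0 otherwise. -/
/-- The poset of nonempty lower sets of the order `t` on `I`, ordered by inclusion. -/
abbrev NLS {I : Type*} (t : PartialOrder I) : Type _ :=
  {S : Set I // S.Nonempty ∧ ∀ ⦃a b : I⦄, t.le a b → b ∈ S → a ∈ S}

section Moebius

open Finset IncidenceAlgebra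

variable {𝕜 α β : Type*} [AddCommGroup 𝕜] [One 𝕜] [PartialOrder α] [LocallyFiniteOrder α]
  [DecidableEq α]

lemma mu_eq_of_sum_Icc_eq_zero {g : α → 𝕜} {a b : α} (hself : g a = 1)
    (hsum : ∀ c, a < c → ∑ x ∈ Icc a c, g x = 0) (hab : a ≤ b) : mu 𝕜 a b = g b := by
  induction hn : #(Icc a b) using Nat.strong_induction_on generalizing b with
  | _ n ih =>
    obtain rfl | hlt := hab.eq_or_lt
    · rw [mu_self, hself]
    · have mu_eq : ∀ x ∈ Ico a b, mu 𝕜 a x = g x := fun x hx ↦ by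
        obtain ⟨hax, hxb⟩ := mem_Ico.1 hx
        exact ih _ (hn ▸ card_lt_card (Icc_ssubset_Icc_right hab le_rfl hxb)) hax rfl
      rw [mu_eq_neg_sum_Ico_of_ne hlt.ne, sum_congr rfl mu_eq, neg_eq_iff_add_eq_zero,
        sum_Ico_add_eq_sum_Icc hab, hsum b hlt]

lemma mu_orderEmbedding_apply [PartialOrder β] [LocallyFiniteOrder β] [DecidableEq β]
    (f : α ↪o β) (hf : (Set.range f).OrdConnected) (a b : α) :
    mu 𝕜 (f a) (f b) = mu 𝕜 a b := by
  by_cases hab : a ≤ b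
  · refine (mu_eq_of_sum_Icc_eq_zero (g := fun x ↦ mu 𝕜 (f a) (f x)) (mu_self _)
      (fun c hac ↦ ?_) hab).symm
    have map_Icc : (Icc a c).map f.toEmbedding = Icc (f a) (f c) :=
      coe_injective <| by simpa using f.image_Icc hf a c
    calc ∑ x ∈ Icc a c, mu 𝕜 (f a) (f x)
        = ∑ y ∈ Icc (f a) (f c), mu 𝕜 (f a) y := by rw [← map_Icc, sum_map]; rfl
      _ = 0 := by rw [sum_Icc_mu_right, if_neg (f.injective.ne hac.ne)]
  · rw [apply_eq_zero_of_not_le hab, apply_eq_zero_of_not_le (mt f.le_iff_le.1 hab)]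

end Moebius

section LowerSet

variable {α : Type*} [PartialOrder α] {A B T : LowerSet α} {C : Set α}

lemma isAntichain_sdiff_iff_subset_setOfPred_minimal (hTB : T ≤ B) :
    IsAntichain (· ≤ ·) (T \ A : Set α) ↔
      (T \ A : Set α) ⊆ {x | Minimal (· ∈ (B \ A : Set α)) x} := by
  refine ⟨fun h x hx ↦ ⟨⟨hTB hx.1, hx.2⟩, fun y hy hyx ↦ ?_⟩,
    (setOfPred_minimal_antichain _).subset⟩
  exact (h.eq ⟨T.lower hyx hx.1, hy.2⟩ hx hyx).ge

lemma isLowerSet_union_of_subset_setOfPred_minimal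
    (hC : C ⊆ {x | Minimal (· ∈ (B \ A : Set α)) x}) :
    IsLowerSet (A ∪ C : Set α) := by
  rintro x y hyx (hx | hx)
  · exact Or.inl (A.lower hyx hx)
  · by_cases hy : y ∈ A
    · exact Or.inl hy
    · exact Or.inr ((hC hx).eq_of_le ⟨B.lower hyx (hC hx).prop.1, hy⟩ hyx ▸ hx)

lemma bijOn_sdiff_powerset_setOfPred_minimal (hAB : A ≤ B) :
    Set.BijOn (fun T : LowerSet α ↦ (T \ A : Set α))
      {T ∈ Set.Icc A B | IsAntichain (· ≤ ·) (T \ A : Set α)}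
      (𝒫 {x | Minimal (· ∈ (B \ A : Set α)) x}) := by
  refine ⟨fun T hT ↦ (isAntichain_sdiff_iff_subset_setOfPred_minimal hT.1.2).1 hT.2,
    fun T hT T' hT' h ↦ SetLike.coe_injective ?_, fun C hC ↦ ?_⟩
  · rw [← Set.sdiff_union_of_subset hT.1.1, ← Set.sdiff_union_of_subset hT'.1.1]
    exact congrArg (· ∪ (A : Set α)) h
  · let T : LowerSet α := ⟨A ∪ C, isLowerSet_union_of_subset_setOfPred_minimal hC⟩
    have hTA : (T \ A : Set α) = C :=
      Set.union_sdiff_cancel_left fun x hx ↦ (hC hx.2).prop.2 hx.1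
    have hTB : T ≤ B := Set.union_subset hAB fun x hx ↦ (hC hx).prop.1
    refine ⟨T, ⟨⟨Set.subset_union_left, hTB⟩, ?_⟩, hTA⟩
    rw [isAntichain_sdiff_iff_subset_setOfPred_minimal hTB, hTA]
    exact hC

open Finset IncidenceAlgebra

variable (𝕜 : Type*) [Ring 𝕜] [Finite α] [LocallyFiniteOrder (LowerSet α)]

open Classical in
lemma sum_Icc_neg_one_pow_ncard_sdiff (hAB : A < B) :
    ∑ T ∈ Icc A B, (if IsAntichain (· ≤ ·) (T \ A : Set α) then
      (-1 : 𝕜) ^ (T \ A : Set α).ncard else 0) = 0 := by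
  let M : Finset α := (Set.toFinite {x | Minimal (· ∈ (B \ A : Set α)) x}).toFinset
  have hM : M.Nonempty := by
    obtain ⟨x, hx⟩ := (Set.toFinite (B \ A : Set α)).exists_minimal
      (Set.sdiff_nonempty.2 (not_le_of_gt hAB))
    exact ⟨x, by simpa [M] using hx⟩
  have hbij := bijOn_sdiff_powerset_setOfPred_minimal hAB.le
  have hsum : ∑ C ∈ M.powerset, (-1 : 𝕜) ^ #C = 0 := by
    exact_mod_cast congrArg (Int.cast : ℤ → 𝕜) (sum_powerset_neg_one_pow_card_of_nonempty hM)
  rw [← sum_filter, ← hsum]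
  refine sum_nbij (fun T ↦ (Set.toFinite (T \ A : Set α)).toFinset) (fun T hT ↦ ?_)
    (fun T hT T' hT' h ↦ ?_) (fun C hC ↦ ?_) (fun T _ ↦ ?_)
  · exact mem_powerset.2 <| Set.Finite.toFinset_mono <| hbij.mapsTo (by simpa using hT)
  · exact hbij.injOn (by simpa using hT) (by simpa using hT') (Set.Finite.toFinset_inj.1 h)
  · obtain ⟨T, hT, hTC⟩ := hbij.surjOn (show (C : Set α) ∈ 𝒫 _ by simpa [M] using hC)
    exact ⟨T, by simpa using hT, by simpa [← coe_inj] using hTC⟩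
  · rw [Set.ncard_eq_toFinset_card]

open Classical in
theorem mu_lowerSet [DecidableEq (LowerSet α)] (hAB : A ≤ B) :
    mu 𝕜 A B = if IsAntichain (· ≤ ·) (B \ A : Set α) then
      (-1) ^ (B \ A : Set α).ncard else 0 :=
  mu_eq_of_sum_Icc_eq_zero (g := fun T : LowerSet α ↦
    if IsAntichain (· ≤ ·) (T \ A : Set α) then (-1 : 𝕜) ^ (T \ A : Set α).ncard else 0)
    (by simp) (fun _ h ↦ sum_Icc_neg_one_pow_ncard_sdiff 𝕜 h) hAB

end LowerSet

section NonemptyLowerSets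

open IncidenceAlgebra

variable {I : Type*} [t : PartialOrder I]

/-- The inclusion of the poset of nonempty lower sets into the lattice of all lower sets, where
Möbius numbers are computed. -/
def NLS.toLowerSet : NLS t ↪o LowerSet I where
  toFun S := ⟨S.1, fun _ _ hba ha ↦ S.2.2 hba ha⟩
  inj' _ _ h := Subtype.ext (congrArg SetLike.coe h)
  map_rel_iff' := Iff.rfl

lemma NLS.ordConnected_range_toLowerSet : (Set.range (toLowerSet (I := I))).OrdConnected := by
  refine IsUpperSet.ordConnected ?_
  rintro _ L hSL ⟨S, rfl⟩
  exact ⟨⟨L, S.2.1.mono hSL, fun _ _ hab hb ↦ L.lower hab hb⟩, rfl⟩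

open Classical in
theorem mu_nonemptyLowerSets (𝕜 : Type*) [Ring 𝕜] [Finite I] [DecidableEq (NLS t)]
    [LocallyFiniteOrder (NLS t)] {S T : NLS t} (hST : S ≤ T) :
    mu 𝕜 S T = if IsAntichain (· ≤ ·) (T.1 \ S.1) then (-1) ^ (T.1 \ S.1).ncard else 0 := by
  have := Fintype.ofFinite (LowerSet I)
  let := Fintype.toLocallyFiniteOrder (α := LowerSet I)
  rw [← mu_orderEmbedding_apply NLS.toLowerSet NLS.ordConnected_range_toLowerSet]
  exact mu_lowerSet 𝕜 (NLS.toLowerSet.monotone hST)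

lemma isAntichain_compl_singleton_iff_of_isBot {r : I} (hr : IsBot r) :
    IsAntichain (· ≤ ·) ({r}ᶜ : Set I) ↔ ∀ x y : I, x ≤ y → x ≠ y → x = r := by
  refine ⟨fun h x y hxy hne ↦ ?_, fun h x hx y _ hne hxy ↦ hx (h x y hxy hne)⟩
  by_contra hx
  have hy : y ≠ r := fun hy ↦ hx ((hy ▸ hxy).antisymm (hr x))
  exact hne (h.eq hx hy hxy)

end NonemptyLowerSets

open IncidenceAlgebra Classical in
theorem mu_nonempty_lowerSets_rootedTree_general (𝕜 : Type*) [Ring 𝕜] {I : Type*} [Fintype I]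
    (t : PartialOrder I) (r : I) (hr : ∀ v : I, t.le r v)
    [DecidableEq (NLS t)] [LocallyFiniteOrder (NLS t)] :
    mu 𝕜
      (⟨{r}, Set.singleton_nonempty r, fun a b hab hb =>
        show a ∈ ({r} : Set I) from t.le_antisymm a r (hb ▸ hab) (hr a)⟩ : NLS t)
      (⟨Set.univ, ⟨r, trivial⟩, fun a b _ _ => trivial⟩ : NLS t) =
      if ∀ x y : I, t.le x y → x ≠ y → x = r then
        (-1 : 𝕜) ^ (Fintype.card I - 1)
      else 0 := by
  have card_compl : ({r}ᶜ : Set I).ncard = Fintype.card I - 1 := by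
    rw [Set.ncard_compl, Set.ncard_singleton, Nat.card_eq_fintype_card]
  rw [mu_nonemptyLowerSets 𝕜 (Set.subset_univ _)]
  simp only [← Set.compl_eq_univ_sdiff, isAntichain_compl_singleton_iff_of_isBot hr, card_compl]

open IncidenceAlgebra Classical in
/-- For a rooted tree `t` on a finite type `I` with root `r`, the Möbius number of the
poset of nonempty lower sets of `t` (from its least element `{r}` to its greatest
element `I`) is `(-1)^(|I|-1)` if `t` is a corolla, and `0` otherwise. -/
theorem mu_nonempty_lowerSets_rootedTree {I : Type*} [Fintype I]
    (t : PartialOrder I) (ht : IsForest t) (r : I) (hr : ∀ v : I, t.le r v)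
    [DecidableEq (NLS t)] [LocallyFiniteOrder (NLS t)] :
    mu ℤ
      (⟨{r}, Set.singleton_nonempty r, fun a b hab hb =>
        show a ∈ ({r} : Set I) from t.le_antisymm a r (hb ▸ hab) (hr a)⟩ : NLS t)
      (⟨Set.univ, ⟨r, trivial⟩, fun a b _ _ => trivial⟩ : NLS t) =
      if ∀ x y : I, t.le x y → x ≠ y → x = r then
        (-1 : ℤ) ^ (Fintype.card I - 1)
      else 0 :=
  mu_nonempty_lowerSets_rootedTree_general ℤ t r hr
end

section
/- For every natural number n ≥ 1, the number of partial orders on Fin n that are rooted trees (i.e., have a least element and all principal lower sets {u : u ≤ v} are chains) equals n^(n-1). -/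
/-!
A variant of Pitman's double counting, for the number `F(R)` of forest orders on an `n`-element set
with set of roots `R`: if `v ∉ R` then `(|R| + 1) F(R) = |R| n F(R ∪ {v})`. Indeed a forest with
roots `R` amounts to a forest with roots `R ∪ {v}` together with a vertex outside the tree of `v`,
which becomes the parent of `v`. Each of the `n F(R ∪ {v})` pairs of a forest with roots `R ∪ {v}`
and a vertex has the vertex in the tree of exactly one of the `|R| + 1` roots, and by symmetry each
root accounts for the same number of pairs; so a fraction `|R| / (|R| + 1)` of them avoids `v`.
Starting from the discrete order, `F(univ) = 1`, this gives `n F(R) = |R| n ^ (n - |R|)`. Rooted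
trees are the case `|R| = 1`, with `n` choices of the root.
-/

lemma ncard_eq_sum_ncard_of_existsUnique {α β : Type*} {s : Set α} (hs : s.Finite) {t : Finset β}
    {p : α → β → Prop} (h : ∀ a ∈ s, ∃! b, b ∈ t ∧ p a b) :
    s.ncard = ∑ b ∈ t, {a ∈ s | p a b}.ncard := by
  classical
  lift s to Finset α using hs
  have card_above : ∀ a ∈ s, (t.bipartiteAbove p a).card = 1 := fun a ha => by
    simpa [Finset.card_eq_one, Finset.singleton_iff_unique_mem, Finset.mem_bipartiteAbove]
      using h a ha
  have card_below (b : β) : {a ∈ (s : Set α) | p a b}.ncard = (s.bipartiteBelow p b).card := by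
    rw [← Set.ncard_coe_finset, Finset.coe_bipartiteBelow]
    rfl
  calc (s : Set α).ncard = ∑ a ∈ s, (t.bipartiteAbove p a).card := by
        rw [Finset.sum_congr rfl card_above, Finset.sum_const, smul_eq_mul, mul_one,
          Set.ncard_coe_finset]
    _ = ∑ b ∈ t, (s.bipartiteBelow p b).card :=
        Finset.sum_card_bipartiteAbove_eq_sum_card_bipartiteBelow p
    _ = ∑ b ∈ t, {a ∈ (s : Set α) | p a b}.ncard := by simp only [card_below]

instance finite_partialOrder {I : Type*} [Finite I] : Finite (PartialOrder I) :=
  Finite.of_injective (fun t : PartialOrder I => t.le) fun _ _ h =>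
    PartialOrder.ext fun a b => iff_of_eq (congrFun₂ h a b)

section Forest

variable {I : Type*} {t : PartialOrder I} {v w : I}

lemma IsForest.le_total_of_le (ht : IsForest t) {a b c : I} (ha : a ≤ c) (hb : b ≤ c) :
    a ≤ b ∨ b ≤ a :=
  (ht c).total ha hb

lemma IsForest.le_of_isMin (ht : IsForest t) (hv : IsMin v) {a b : I} (hvb : v ≤ b)
    (hab : a ≤ b) : v ≤ a :=
  (ht.le_total_of_le hvb hab).elim id fun h => hv h

/-- The roots of a forest, defined for any partial order as its minimal elements. -/
def roots (_ : PartialOrder I) : Set I := {v | IsMin v}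

lemma IsForest.existsUnique_root_le [Finite I] (ht : IsForest t) (w : I) :
    ∃! r, r ∈ roots t ∧ r ≤ w := by
  obtain ⟨r, hrw, hr⟩ := exists_minimal_le_of_wellFoundedLT (fun _ : I => True) w trivial
  have hr : IsMin r := minimal_true.1 hr
  exact ⟨r, ⟨hr, hrw⟩, fun s ⟨hs, hsw⟩ => le_antisymm (ht.le_of_isMin hs hsw hrw)
    (ht.le_of_isMin hr hrw hsw)⟩

/-- The order obtained from `t` by forcing `w < v`: in a forest with root `v`, this attaches
the tree of `v` to the vertex `w` of another tree. -/
abbrev graft (t : PartialOrder I) (v w : I) (hvw : ¬ t.le v w) : PartialOrder I where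
  le a b := t.le a b ∨ t.le a w ∧ t.le v b
  -- An omitted `lt` would be filled in with the strict order of `t`.
  lt := _
  lt_iff_le_not_ge _ _ := Iff.rfl
  le_refl a := .inl le_rfl
  le_trans a b c := by
    rintro (hab | ⟨haw, hvb⟩) (hbc | ⟨hbw, hvc⟩)
    · exact .inl (hab.trans hbc)
    · exact .inr ⟨hab.trans hbw, hvc⟩
    · exact .inr ⟨haw, hvb.trans hbc⟩
    · exact .inr ⟨haw, hvc⟩
  le_antisymm a b := by
    rintro (hab | ⟨haw, hvb⟩) (hba | ⟨hbw, hva⟩)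
    · exact hab.antisymm hba
    · exact absurd (hva.trans (hab.trans hbw)) hvw
    · exact absurd (hvb.trans (hba.trans haw)) hvw
    · exact absurd (hvb.trans hbw) hvw

/-- The order obtained from `t` by dropping the relations that enter the upper set of `v` from
outside: in a forest, this cuts the edge from `v` to its parent. -/
abbrev prune (t : PartialOrder I) (v : I) : PartialOrder I where
  le a b := t.le a b ∧ (t.le v b → t.le v a)
  lt := _
  lt_iff_le_not_ge _ _ := Iff.rfl
  le_refl _ := ⟨le_rfl, id⟩
  le_trans _ _ _ hab hbc := ⟨hab.1.trans hbc.1, hab.2 ∘ hbc.2⟩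
  le_antisymm _ _ hab hba := hab.1.antisymm hba.1

lemma IsForest.graft (ht : IsForest t) (hv : IsMin v) (hvw : ¬ v ≤ w) :
    IsForest (graft t v w hvw) := by
  rintro b x (hxb | ⟨hxw, hvb⟩) y (hyb | ⟨hyw, hvb'⟩) -
  · exact (ht.le_total_of_le hxb hyb).imp .inl .inl
  · exact .inr (.inr ⟨hyw, ht.le_of_isMin hv hvb' hxb⟩)
  · exact .inl (.inr ⟨hxw, ht.le_of_isMin hv hvb hyb⟩)
  · exact (ht.le_total_of_le hxw hyw).imp .inl .inl

lemma IsForest.prune (ht : IsForest t) (v : I) : IsForest (prune t v) := by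
  rintro b x ⟨hxb, hx⟩ y ⟨hyb, hy⟩ -
  exact (ht.le_total_of_le hxb hyb).imp (fun h => ⟨h, fun hvy => hx (hvy.trans hyb)⟩)
    fun h => ⟨h, fun hvx => hy (hvx.trans hxb)⟩

lemma roots_graft (hvw : ¬ v ≤ w) : roots (graft t v w hvw) = roots t \ {v} := by
  ext x
  constructor
  · refine fun hx => ⟨fun a hax => ?_, ?_⟩
    · rcases hx (.inl hax) with h | ⟨hxw, hva⟩
      · exact h
      · exact absurd (hva.trans (hax.trans hxw)) hvw
    · rintro rfl
      exact hvw ((hx (.inr ⟨le_rfl, le_rfl⟩)).elim id And.left)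
  · rintro ⟨hx, hxv⟩ a (hax | ⟨-, hvx⟩)
    · exact .inl (hx hax)
    · exact absurd (hx.eq_of_le hvx).symm hxv

lemma roots_prune : roots (prune t v) = insert v (roots t) := by
  ext x
  constructor
  · refine fun hx => or_iff_not_imp_left.2 fun hxv a hax => (hx ⟨hax, fun hvx => ?_⟩).1
    exact absurd ((hx ⟨hvx, fun _ => le_rfl⟩).1.antisymm hvx) hxv
  · rintro (rfl | hx) a ⟨hax, hva⟩
    · exact ⟨hva le_rfl, fun _ => le_rfl⟩
    · exact ⟨hx hax, fun h => h.trans hax⟩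

lemma prune_graft (ht : IsForest t) (hv : IsMin v) (hvw : ¬ v ≤ w) :
    prune (graft t v w hvw) v = t := by
  refine PartialOrder.ext fun a b => ⟨?_, fun hab => ?_⟩
  · rintro ⟨hab | ⟨haw, hvb⟩, hva⟩
    · exact hab
    · rcases hva (.inl hvb) with hva | ⟨hvw', -⟩
      · exact absurd (hva.trans haw) hvw
      · exact absurd hvw' hvw
  · refine ⟨.inl hab, ?_⟩
    rintro (hvb | ⟨hvw', -⟩)
    · exact .inl (ht.le_of_isMin hv hvb hab)
    · exact absurd hvw' hvw

lemma not_prune_le_of_lt (hwv : w < v) : ¬ (prune t v).le v w := fun h => hwv.not_ge h.1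

lemma graft_prune (ht : IsForest t) (hwv : w ⋖ v) :
    graft (prune t v) v w (not_prune_le_of_lt hwv.lt) = t := by
  refine PartialOrder.ext fun a b => ⟨?_, fun hab => ?_⟩
  · rintro (⟨hab, -⟩ | ⟨⟨haw, -⟩, ⟨hvb, -⟩⟩)
    · exact hab
    · exact haw.trans (hwv.le.trans hvb)
  · by_cases hva : v ≤ b → v ≤ a
    · exact .inl ⟨hab, hva⟩
    obtain ⟨hvb, hva⟩ := Classical.not_imp.1 hva
    have hav : a < v := ((ht.le_total_of_le hab hvb).resolve_right hva).lt_of_not_ge hva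
    have haw : a ≤ w := (ht.le_total_of_le hav.le hwv.le).elim id fun hwa =>
      ((hwv.eq_or_eq hwa hav.le).resolve_right hav.ne).le
    exact .inr ⟨⟨haw, fun h => absurd h hwv.lt.not_ge⟩, ⟨hvb, fun _ => le_rfl⟩⟩

lemma eq_of_graft_eq {t' : PartialOrder I} {w' : I} (ht : IsForest t) (ht' : IsForest t')
    (hv : v ∈ roots t) (hv' : v ∈ roots t') (hvw : ¬ t.le v w) (hvw' : ¬ t'.le v w')
    (h : graft t v w hvw = graft t' v w' hvw') : t = t' ∧ w = w' := by
  obtain rfl : t = t' := by rw [← prune_graft ht hv hvw, h, prune_graft ht' hv' hvw']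
  have le_of_graft_le {x y : I} (hvx : ¬ v ≤ x) (hvy : ¬ v ≤ y)
      (hle : (graft t v y hvy).le x v) : x ≤ y :=
    hle.elim (fun hxv => absurd (hv hxv) hvx) And.left
  have graft_le {x : I} (hvx : ¬ v ≤ x) : (graft t v x hvx).le x v := .inr ⟨le_rfl, le_rfl⟩
  exact ⟨rfl, le_antisymm (le_of_graft_le hvw hvw' (h ▸ graft_le hvw))
    (le_of_graft_le hvw' hvw (h ▸ graft_le hvw'))⟩

end Forest

section Counting

variable {I J : Type*}

/-- The forests on `I` with set of roots `R`. -/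
def forestsWithRoots (R : Set I) : Set (PartialOrder I) := {t | IsForest t ∧ roots t = R}

/-- Pairs of a forest with set of roots `R` and a marked vertex in the tree with root `r`. -/
def markedForests (R : Set I) (r : I) : Set (PartialOrder I × I) :=
  {p ∈ forestsWithRoots R ×ˢ Set.univ | p.1.le r p.2}

/-- Transport of partial orders along a bijection. -/
def relabel (e : I ≃ J) : PartialOrder I ≃ PartialOrder J where
  toFun _ := PartialOrder.lift e.symm e.symm.injective
  invFun _ := PartialOrder.lift e e.injective
  left_inv t := PartialOrder.ext fun a b =>
    iff_of_eq (congrArg₂ t.le (e.symm_apply_apply a) (e.symm_apply_apply b))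
  right_inv t := PartialOrder.ext fun a b =>
    iff_of_eq (congrArg₂ t.le (e.apply_symm_apply a) (e.apply_symm_apply b))

lemma relabel_le_iff (e : I ≃ J) (t : PartialOrder I) {a b : I} :
    (relabel e t).le (e a) (e b) ↔ t.le a b :=
  iff_of_eq (congrArg₂ t.le (e.symm_apply_apply a) (e.symm_apply_apply b))

lemma roots_relabel (e : I ≃ J) (t : PartialOrder I) : roots (relabel e t) = e '' roots t := by
  ext x
  obtain ⟨x, rfl⟩ := e.surjective x
  simp only [roots, IsMin, Set.mem_ofPred_eq, e.injective.mem_set_image, e.surjective.forall,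
    relabel_le_iff]

lemma isForest_relabel (e : I ≃ J) {t : PartialOrder I} :
    IsForest (relabel e t) ↔ IsForest t := by
  simp only [IsForest, IsChain, Set.Pairwise, Set.mem_ofPred_eq, e.surjective.forall,
    relabel_le_iff, e.injective.ne_iff]

lemma relabel_mem_forestsWithRoots (e : I ≃ J) {t : PartialOrder I} {R : Set I} :
    relabel e t ∈ forestsWithRoots (e '' R) ↔ t ∈ forestsWithRoots R := by
  simp only [forestsWithRoots, Set.mem_ofPred_eq, isForest_relabel, roots_relabel,
    e.injective.image_injective.eq_iff]

lemma ncard_markedForests_image (e : I ≃ J) (R : Set I) (r : I) :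
    (markedForests (e '' R) (e r)).ncard = (markedForests R r).ncard := by
  suffices h : markedForests (e '' R) (e r) = (relabel e).prodCongr e '' markedForests R r by
    rw [h, Set.ncard_image_of_injective _ (Equiv.injective _)]
  ext p
  obtain ⟨⟨t, w⟩, rfl⟩ := ((relabel e).prodCongr e).surjective p
  rw [Equiv.injective _ |>.mem_set_image]
  simp only [markedForests, Equiv.prodCongr_apply, Prod.map_apply, Set.mem_ofPred_eq, Set.mem_prod,
    Set.mem_univ, and_true, relabel_mem_forestsWithRoots, relabel_le_iff]

lemma ncard_markedForests_eq {R : Set I} {r s : I} (hr : r ∈ R) (hs : s ∈ R) :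
    (markedForests R r).ncard = (markedForests R s).ncard := by
  classical
  have h := ncard_markedForests_image (Equiv.swap r s) R r
  rwa [(Equiv.swap_bijOn_self (iff_of_true hr hs)).image_eq, Equiv.swap_apply_left, eq_comm] at h

lemma ncard_forestsWithRoots_univ : (forestsWithRoots (Set.univ : Set I)).ncard = 1 := by
  let discrete : PartialOrder I :=
    { le := Eq
      le_refl := Eq.refl
      le_trans _ _ _ := Eq.trans
      le_antisymm _ _ h _ := h }
  refine Set.ncard_eq_one.2 ⟨discrete, Set.eq_singleton_iff_unique_mem.2 ⟨⟨?_, ?_⟩, ?_⟩⟩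
  · rintro v a rfl b rfl hab
    exact absurd rfl hab
  · exact Set.eq_univ_of_forall fun v a hav => Eq.symm hav
  · rintro t ⟨-, ht⟩
    have isMin (b : I) : b ∈ roots t := ht ▸ Set.mem_univ b
    exact PartialOrder.ext fun a b => ⟨(isMin b).eq_of_le, fun h => Eq.le h⟩

variable [Finite I]

lemma ncard_mul_ncard_markedForests {R : Set I} {r : I} (hr : r ∈ R) :
    R.ncard * (markedForests R r).ncard = (forestsWithRoots R).ncard * Nat.card I := by
  have root_below : ∀ p ∈ forestsWithRoots R ×ˢ (Set.univ : Set I),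
      ∃! s, s ∈ R.toFinite.toFinset ∧ p.1.le s p.2 := by
    rintro ⟨t, w⟩ ⟨⟨ht, rfl⟩, -⟩
    simpa using ht.existsUnique_root_le w
  calc R.ncard * (markedForests R r).ncard
      = ∑ s ∈ R.toFinite.toFinset, (markedForests R s).ncard := by
        rw [Set.ncard_eq_toFinset_card R, ← smul_eq_mul, ← Finset.sum_const]
        exact Finset.sum_congr rfl fun s hs =>
          ncard_markedForests_eq hr (R.toFinite.mem_toFinset.1 hs)
    _ = (forestsWithRoots R ×ˢ (Set.univ : Set I)).ncard :=
        (ncard_eq_sum_ncard_of_existsUnique (Set.toFinite _) root_below).symm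
    _ = (forestsWithRoots R).ncard * Nat.card I := by rw [Set.ncard_prod, Set.ncard_univ]

lemma ncard_prod_univ_sdiff_markedForests {R : Set I} {v : I} (hv : v ∉ R) :
    ((forestsWithRoots (insert v R) ×ˢ Set.univ) \ markedForests (insert v R) v).ncard =
      (forestsWithRoots R).ncard := by
  have root_mem {t : PartialOrder I} (ht : t ∈ forestsWithRoots (insert v R)) : v ∈ roots t :=
    ht.2 ▸ Set.mem_insert v R
  have not_le {p : PartialOrder I × I} (hp : p ∈ (forestsWithRoots (insert v R) ×ˢ Set.univ) \
      markedForests (insert v R) v) : ¬ p.1.le v p.2 := fun h => hp.2 ⟨hp.1, h⟩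
  refine Set.ncard_congr (fun p hp => graft p.1 v p.2 (not_le hp)) ?_ ?_ ?_
  · rintro ⟨t, w⟩ hp
    refine ⟨hp.1.1.1.graft (root_mem hp.1.1) _, ?_⟩
    rw [roots_graft, hp.1.1.2, Set.insert_sdiff_self_of_notMem hv]
  · rintro ⟨t, w⟩ ⟨t', w'⟩ hp hp' h
    exact Prod.ext_iff.2 (eq_of_graft_eq hp.1.1.1 hp'.1.1.1 (root_mem hp.1.1)
      (root_mem hp'.1.1) (not_le hp) (not_le hp') h)
  · rintro t ⟨ht, rfl⟩
    obtain ⟨u, huv⟩ := not_isMin_iff.1 hv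
    obtain ⟨w, -, hwv⟩ := exists_le_covBy_of_lt huv
    exact ⟨(prune t v, w), ⟨⟨⟨ht.prune v, roots_prune⟩, trivial⟩,
      fun h => not_prune_le_of_lt hwv.lt h.2⟩, graft_prune ht hwv⟩

lemma ncard_forestsWithRoots_add {R : Set I} {v : I} (hv : v ∉ R) :
    (forestsWithRoots R).ncard + (markedForests (insert v R) v).ncard =
      (forestsWithRoots (insert v R)).ncard * Nat.card I := by
  have marked_subset :
      markedForests (insert v R) v ⊆ forestsWithRoots (insert v R) ×ˢ Set.univ :=
    Set.sep_subset _ _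
  rw [← ncard_prod_univ_sdiff_markedForests hv, Set.ncard_sdiff_add_ncard_of_subset marked_subset,
    Set.ncard_prod, Set.ncard_univ]

lemma ncard_add_one_mul_ncard_forestsWithRoots {R : Set I} {v : I} (hv : v ∉ R) :
    (R.ncard + 1) * (forestsWithRoots R).ncard =
      R.ncard * (Nat.card I * (forestsWithRoots (insert v R)).ncard) := by
  have total := ncard_mul_ncard_markedForests (Set.mem_insert v R)
  rw [Set.ncard_insert_of_notMem hv] at total
  have split := ncard_forestsWithRoots_add hv
  refine Nat.add_right_cancel (m := (forestsWithRoots (insert v R)).ncard * Nat.card I) ?_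
  calc (R.ncard + 1) * (forestsWithRoots R).ncard +
        (forestsWithRoots (insert v R)).ncard * Nat.card I
      = (R.ncard + 1) *
          ((forestsWithRoots R).ncard + (markedForests (insert v R) v).ncard) := by
        rw [← total, mul_add]
    _ = R.ncard * (Nat.card I * (forestsWithRoots (insert v R)).ncard) +
          (forestsWithRoots (insert v R)).ncard * Nat.card I := by
        rw [split]
        ring

theorem card_mul_ncard_forestsWithRoots (R : Set I) :
    Nat.card I * (forestsWithRoots R).ncard = R.ncard * Nat.card I ^ Rᶜ.ncard := by
  induction h : Rᶜ.ncard generalizing R with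
  | zero =>
    obtain rfl : R = Set.univ := Set.compl_empty_iff.1 ((Set.ncard_eq_zero).1 h)
    rw [ncard_forestsWithRoots_univ, Set.ncard_univ, pow_zero]
  | succ m ih =>
    obtain ⟨v, hv⟩ : Rᶜ.Nonempty := Set.nonempty_of_ncard_ne_zero (by rw [h]; exact m.succ_ne_zero)
    have ncard_compl_insert : (insert v R)ᶜ.ncard = m := by
      rw [Set.ncard_compl, Set.ncard_insert_of_notMem hv, Nat.sub_add_eq, ← Set.ncard_compl, h,
        Nat.add_sub_cancel]
    refine Nat.eq_of_mul_eq_mul_left R.ncard.succ_pos ?_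
    calc (R.ncard + 1) * (Nat.card I * (forestsWithRoots R).ncard)
        = Nat.card I * ((R.ncard + 1) * (forestsWithRoots R).ncard) := Nat.mul_left_comm ..
      _ = Nat.card I * (R.ncard * (Nat.card I * (forestsWithRoots (insert v R)).ncard)) := by
          rw [ncard_add_one_mul_ncard_forestsWithRoots hv]
      _ = Nat.card I * (R.ncard * ((R.ncard + 1) * Nat.card I ^ m)) := by
          rw [ih _ ncard_compl_insert, Set.ncard_insert_of_notMem hv]
      _ = (R.ncard + 1) * (R.ncard * Nat.card I ^ (m + 1)) := by ring

lemma mem_forestsWithRoots_singleton {t : PartialOrder I} {r : I} :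
    t ∈ forestsWithRoots {r} ↔ IsRootedTree t ∧ ∀ v, r ≤ v := by
  constructor
  · rintro ⟨ht, hr⟩
    have least (v : I) : r ≤ v := by
      obtain ⟨s, ⟨hs, hsv⟩, -⟩ := ht.existsUnique_root_le v
      rw [hr] at hs
      exact hs ▸ hsv
    exact ⟨⟨⟨r, least⟩, ht⟩, least⟩
  · rintro ⟨⟨-, ht⟩, least⟩
    exact ⟨ht, Set.eq_singleton_iff_unique_mem.2
      ⟨fun a _ => least a, fun s hs => (hs.eq_of_le (least s)).symm⟩⟩

end Counting

theorem card_rootedTrees_general (I : Type*) [Finite I] [Nonempty I] :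
    Nat.card {t : PartialOrder I // IsRootedTree t} = Nat.card I ^ (Nat.card I - 1) := by
  have := Fintype.ofFinite I
  have unique_root : ∀ t ∈ {t : PartialOrder I | IsRootedTree t},
      ∃! r, r ∈ Finset.univ ∧ ∀ v, t.le r v := by
    rintro t ⟨⟨r, hr⟩, -⟩
    exact ⟨r, ⟨Finset.mem_univ r, hr⟩, fun s hs => le_antisymm (hs.2 r) (hr s)⟩
  have trees_eq (r : I) :
      {t ∈ {t : PartialOrder I | IsRootedTree t} | ∀ v, t.le r v} = forestsWithRoots {r} :=
    Set.ext fun _ => mem_forestsWithRoots_singleton.symm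
  have card_trees (r : I) : Nat.card I * (forestsWithRoots {r}).ncard =
      Nat.card I ^ (Nat.card I - 1) := by
    rw [card_mul_ncard_forestsWithRoots, Set.ncard_singleton, one_mul, Set.ncard_compl,
      Set.ncard_singleton]
  refine Nat.eq_of_mul_eq_mul_left (Nat.card_pos (α := I)) ?_
  calc Nat.card I * {t : PartialOrder I | IsRootedTree t}.ncard
      = ∑ r : I, Nat.card I * (forestsWithRoots {r}).ncard := by
        simp only [ncard_eq_sum_ncard_of_existsUnique (Set.toFinite _) unique_root, trees_eq,
          Finset.mul_sum]
    _ = Nat.card I * Nat.card I ^ (Nat.card I - 1) := by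
        simp only [card_trees, Finset.sum_const, Finset.card_univ, smul_eq_mul,
          Fintype.card_eq_nat_card]

/-- Cayley's formula: the number of partial orders on `Fin n` that are rooted trees
equals `n^(n-1)`. -/
theorem card_rootedTrees (n : ℕ) (hn : 1 ≤ n) :
    Nat.card {t : PartialOrder (Fin n) // IsRootedTree t} = n ^ (n - 1) := by
  have : Nonempty (Fin n) := ⟨⟨0, hn⟩⟩
  simpa only [Nat.card_fin] using card_rootedTrees_general (Fin n)
end
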